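/- arXiv:2204.00870 — 2 statements merged into one kernel-verified Lean document; each statement's English description precedes it below -/
import Mathlib

section
/- Completeness of threshold refutation for deterministic programs: let T_new and T_old be two terminating transition systems sharing an input type X, input set Θ₀, and initial-state maps ι_new, ι_old, and assume both systems are deterministic, i.e., every state of each system has exactly one successor. If t ∈ ℝ is not a threshold for the DiffCost problem, then there exist an anti-potential function χ_new for T_new and a potential function φ_old for T_old such that χ_new(ι_new x) − φ_old(ι_old x) > t for at least one x ∈ Θ₀. -/
/-- A run of the transition system from state `s`. -/
def IsRun {S : Type*} (step : S → S → Prop) (s : S) (ρ : ℕ → S) : Prop :=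
  ρ 0 = s ∧ ∀ n, step (ρ n) (ρ (n + 1))

/-- `s'` is reachable from `s`. -/
def ReachableFrom {S : Type*} (step : S → S → Prop) (s s' : S) : Prop :=
  ∃ ρ n, IsRun step s ρ ∧ ρ n = s'

/-- `s'` is reachable from some initial state in `Init`. -/
def Reachable {S : Type*} (step : S → S → Prop) (Init : Set S) (s' : S) : Prop :=
  ∃ s ∈ Init, ReachableFrom step s s'

/-- The system is terminating: every run from a reachable state visits a terminal state. -/
def Terminating {S : Type*} (step : S → S → Prop) (Term Init : Set S) : Prop :=
  ∀ s, Reachable step Init s → ∀ ρ, IsRun step s ρ → ∃ n, ρ n ∈ Term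

/-- The cost of a run: `c (ρ N) - c (ρ 0)` where `N` is the least index with `ρ N ∈ Term`. -/
noncomputable def RunCost {S : Type*} (Term : Set S) (c : S → ℤ) (ρ : ℕ → S) : ℤ :=
  c (ρ (sInf {n | ρ n ∈ Term})) - c (ρ 0)

/-- Potential function: sufficiency preservation and sufficiency on termination. -/
def IsPF {S : Type*} (step : S → S → Prop) (Term Init : Set S) (c : S → ℤ)
    (φ : S → ℝ) : Prop :=
  (∀ s s', Reachable step Init s → step s s' →
    φ s ≥ φ s' + ((c s' : ℝ) - (c s : ℝ))) ∧
  (∀ s, Reachable step Init s → s ∈ Term → φ s ≥ 0)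

/-- Anti-potential function: insufficiency preservation and insufficiency on termination. -/
def IsAntiPF {S : Type*} (step : S → S → Prop) (Term Init : Set S) (c : S → ℤ)
    (χ : S → ℝ) : Prop :=
  (∀ s s', Reachable step Init s → step s s' →
    χ s ≤ χ s' + ((c s' : ℝ) - (c s : ℝ))) ∧
  (∀ s, Reachable step Init s → s ∈ Term → χ s ≤ 0)

/-- `t` is a threshold for the DiffCost problem. -/
noncomputable def IsThreshold {Sn So X : Type*}
    (stepN : Sn → Sn → Prop) (TermN : Set Sn) (cN : Sn → ℤ)
    (stepO : So → So → Prop) (TermO : Set So) (cO : So → ℤ)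
    (Θ₀ : Set X) (ιN : X → Sn) (ιO : X → So) (t : ℝ) : Prop :=
  ∀ x ∈ Θ₀, ∀ ρN : ℕ → Sn, IsRun stepN (ιN x) ρN →
    ∀ ρO : ℕ → So, IsRun stepO (ιO x) ρO →
      ((RunCost TermN cN ρN : ℝ) - (RunCost TermO cO ρO : ℝ)) ≤ t

/-- In a deterministic system, there is at most one run from each state. -/
theorem IsRun.unique {S : Type*} {step : S → S → Prop} (hdet : ∀ s, ∃! s', step s s')
    {s : S} {ρ σ : ℕ → S} (hρ : IsRun step s ρ) (hσ : IsRun step s σ) : ρ = σ := by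
  funext n
  induction n with
  | zero => rw [hρ.1, hσ.1]
  | succ n ih => exact (hdet (ρ n)).unique (hρ.2 n) (ih ▸ hσ.2 n)

/-- If every state has a successor, there is a run from every state. -/
theorem exists_isRun {S : Type*} {step : S → S → Prop} (hsucc : ∀ s, ∃ s', step s s') (s : S) :
    ∃ ρ, IsRun step s ρ := by
  choose next hnext using hsucc
  refine ⟨fun n => next^[n] s, rfl, fun n => ?_⟩
  simpa only [Function.iterate_succ_apply'] using hnext (next^[n] s)

/-- Dropping the first state of a run gives a run from the second state. -/
theorem IsRun.tail {S : Type*} {step : S → S → Prop} {s : S} {ρ : ℕ → S}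
    (hρ : IsRun step s ρ) : IsRun step (ρ 1) (fun n => ρ (n + 1)) :=
  ⟨rfl, fun n => hρ.2 (n + 1)⟩

/-- A run starting in a terminal state has cost zero. -/
theorem RunCost_eq_zero {S : Type*} {Term : Set S} (c : S → ℤ) {ρ : ℕ → S}
    (h : ρ 0 ∈ Term) : RunCost Term c ρ = 0 := by
  have h0 : sInf {n | ρ n ∈ Term} = 0 := Nat.sInf_eq_zero.2 (Or.inl h)
  simp [RunCost, h0]

/-- The cost of a run starting in a nonterminal state is the cost of its first step plus the
cost of its tail. -/
theorem RunCost_eq_tail_add {S : Type*} {Term : Set S} (c : S → ℤ) {ρ : ℕ → S}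
    (h0 : ρ 0 ∉ Term) (hex : ∃ n, ρ n ∈ Term) :
    RunCost Term c ρ = RunCost Term c (fun n => ρ (n + 1)) + (c (ρ 1) - c (ρ 0)) := by
  have hpos : 1 ≤ sInf {n | ρ n ∈ Term} := by
    rw [Nat.one_le_iff_ne_zero, Ne, Nat.sInf_eq_zero]
    rintro (h | h)
    · exact h0 h
    · exact Set.Nonempty.ne_empty hex h
  have hshift := Nat.sInf_add (p := fun n => ρ n ∈ Term) hpos
  simp only [RunCost, ← hshift]
  ring

/-- In a deterministic terminating system, the run cost is both a potential function and an
anti-potential function. -/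
theorem exists_isPF_isAntiPF_eq_RunCost {S : Type*} {step : S → S → Prop} {Term Init : Set S}
    (c : S → ℤ) (hdet : ∀ s, ∃! s', step s s') (hTerm : ∀ s ∈ Term, ∀ s', step s s' → s' = s)
    (hterminating : Terminating step Term Init) :
    ∃ f : S → ℝ, IsPF step Term Init c f ∧ IsAntiPF step Term Init c f ∧
      ∀ s ρ, IsRun step s ρ → f s = RunCost Term c ρ := by
  choose run hrun using exists_isRun fun s => (hdet s).exists
  have hstep : ∀ s s', Reachable step Init s → step s s' →
      (RunCost Term c (run s) : ℝ) = RunCost Term c (run s') + ((c s' : ℝ) - (c s : ℝ)) := by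
    intro s s' hs hss'
    by_cases hT : s ∈ Term
    · simp [hTerm s hT s' hss']
    · have h0 : run s 0 = s := (hrun s).1
      have h1 : run s 1 = s' := (hdet s).unique (by simpa only [h0] using (hrun s).2 0) hss'
      have htail : (fun n => run s (n + 1)) = run s' :=
        (hrun s).tail.unique hdet (h1 ▸ hrun s')
      have hcost := RunCost_eq_tail_add c (h0.symm ▸ hT) (hterminating s hs _ (hrun s))
      rw [htail, h0, h1] at hcost
      exact_mod_cast hcost
  have hterm : ∀ s ∈ Term, (RunCost Term c (run s) : ℝ) = 0 := fun s hs => by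
    exact_mod_cast RunCost_eq_zero c ((hrun s).1.symm ▸ hs)
  refine ⟨fun s => RunCost Term c (run s), ⟨fun s s' hs h => (hstep s s' hs h).ge,
    fun s _ hs => (hterm s hs).ge⟩, ⟨fun s s' hs h => (hstep s s' hs h).le,
    fun s _ hs => (hterm s hs).le⟩, fun s ρ hρ => ?_⟩
  rw [hρ.unique hdet (hrun s)]

/-- completeness of threshold refutation for deterministic programs. -/
theorem refute_threshold_complete_deterministic {Sn So X : Type*}
    (stepN : Sn → Sn → Prop) (TermN : Set Sn) (cN : Sn → ℤ)
    (stepO : So → So → Prop) (TermO : Set So) (cO : So → ℤ)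
    (Θ₀ : Set X) (ιN : X → Sn) (ιO : X → So)
    (hdetN : ∀ s : Sn, ∃! s', stepN s s')
    (hdetO : ∀ s : So, ∃! s', stepO s s')
    (hTermN : ∀ s ∈ TermN, ∀ s', stepN s s' → s' = s)
    (hTermO : ∀ s ∈ TermO, ∀ s', stepO s s' → s' = s)
    (hterminatingN : Terminating stepN TermN (ιN '' Θ₀))
    (hterminatingO : Terminating stepO TermO (ιO '' Θ₀))
    (t : ℝ) (ht : ¬ IsThreshold stepN TermN cN stepO TermO cO Θ₀ ιN ιO t) :
    ∃ (χN : Sn → ℝ) (φO : So → ℝ),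
      IsAntiPF stepN TermN (ιN '' Θ₀) cN χN ∧
      IsPF stepO TermO (ιO '' Θ₀) cO φO ∧
      ∃ x ∈ Θ₀, χN (ιN x) - φO (ιO x) > t := by
  obtain ⟨χN, -, hχN, hχcost⟩ := exists_isPF_isAntiPF_eq_RunCost cN hdetN hTermN hterminatingN
  obtain ⟨φO, hφO, -, hφcost⟩ := exists_isPF_isAntiPF_eq_RunCost cO hdetO hTermO hterminatingO
  simp only [IsThreshold, not_forall, not_le] at ht
  obtain ⟨x, hx, ρN, hρN, ρO, hρO, hlt⟩ := ht
  refine ⟨χN, φO, hχN, hφO, x, hx, ?_⟩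
  rwa [hχcost _ ρN hρN, hφcost _ ρO hρO]
end

section
/- Let a transition system with states S, total successor relation step, terminal set Term (terminal states only step to themselves), initial set Init, and cost valuation c : S → ℤ be terminating, and let φ be a potential function and χ an anti-potential function for it. Then for every initial state s ∈ Init and every two runs ρ and ρ' from s, Cost(ρ) − Cost(ρ') ≤ φ(s) − χ(s). -/
theorem IsRun.reachable {S : Type*} {step : S → S → Prop} {Init : Set S} {s : S} {ρ : ℕ → S}
    (hρ : IsRun step s ρ) (hs : s ∈ Init) (n : ℕ) : Reachable step Init (ρ n) :=
  ⟨s, hs, ρ, n, hρ, rfl⟩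

/-- In a terminating system, the index defining the cost of a run is a terminal one. -/
theorem IsRun.sInf_mem_term {S : Type*} {step : S → S → Prop} {Term Init : Set S} {s : S}
    {ρ : ℕ → S} (hρ : IsRun step s ρ) (hs : s ∈ Init) (hterm : Terminating step Term Init) :
    ρ (sInf {n | ρ n ∈ Term}) ∈ Term :=
  Nat.sInf_mem (s := {n | ρ n ∈ Term}) (hterm s ⟨s, hs, ρ, 0, hρ, hρ.1⟩ ρ hρ)

/-- Along a run from an initial state, potential plus accumulated cost does not increase. -/
theorem IsPF.add_cost_le {S : Type*} {step : S → S → Prop} {Term Init : Set S} {c : S → ℤ}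
    {φ : S → ℝ} (hφ : IsPF step Term Init c φ) {s : S} (hs : s ∈ Init) {ρ : ℕ → S}
    (hρ : IsRun step s ρ) (n : ℕ) : φ (ρ n) + ((c (ρ n) : ℝ) - c (ρ 0)) ≤ φ s := by
  induction n with
  | zero => simp [hρ.1]
  | succ n ih => linarith [hφ.1 _ _ (hρ.reachable hs n) (hρ.2 n)]

/-- The negative of an anti-potential function is a potential function for the negated cost. -/
theorem IsAntiPF.neg {S : Type*} {step : S → S → Prop} {Term Init : Set S} {c : S → ℤ}
    {χ : S → ℝ} (hχ : IsAntiPF step Term Init c χ) :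
    IsPF step Term Init (fun s => -c s) (fun s => -χ s) := by
  refine ⟨fun s s' hs hstep => ?_, fun s hs ht => ?_⟩
  · have := hχ.1 s s' hs hstep
    push_cast
    linarith
  · have := hχ.2 s hs ht
    linarith

/-- A potential function bounds the cost of every run from an initial state. -/
theorem IsPF.runCost_le {S : Type*} {step : S → S → Prop} {Term Init : Set S} {c : S → ℤ}
    {φ : S → ℝ} (hφ : IsPF step Term Init c φ) (hterm : Terminating step Term Init) {s : S}
    (hs : s ∈ Init) {ρ : ℕ → S} (hρ : IsRun step s ρ) : (RunCost Term c ρ : ℝ) ≤ φ s := by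
  have hle := hφ.add_cost_le hs hρ (sInf {n | ρ n ∈ Term})
  have hnonneg := hφ.2 _ (hρ.reachable hs _) (hρ.sInf_mem_term hs hterm)
  rw [RunCost]
  push_cast
  linarith

/-- An anti-potential function bounds from below the cost of every run from an initial state. -/
theorem IsAntiPF.le_runCost {S : Type*} {step : S → S → Prop} {Term Init : Set S} {c : S → ℤ}
    {χ : S → ℝ} (hχ : IsAntiPF step Term Init c χ) (hterm : Terminating step Term Init) {s : S}
    (hs : s ∈ Init) {ρ : ℕ → S} (hρ : IsRun step s ρ) : χ s ≤ (RunCost Term c ρ : ℝ) := by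
  have h := hχ.neg.runCost_le hterm hs hρ
  rw [RunCost] at h ⊢
  push_cast at h ⊢
  linarith

/-- for a single terminating system with a PF `φ` and an anti-PF `χ`,
the costs of any two runs from the same initial state differ by at most `φ s - χ s`. -/
theorem pf_antipf_single_program_bound {S : Type*}
    (step : S → S → Prop) (Term Init : Set S) (c : S → ℤ)
    (htotal : ∀ s : S, ∃ s', step s s')
    (hTerm : ∀ s ∈ Term, ∀ s', step s s' → s' = s)
    (hterminating : Terminating step Term Init)
    (φ : S → ℝ) (hφ : IsPF step Term Init c φ)
    (χ : S → ℝ) (hχ : IsAntiPF step Term Init c χ)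
    (s : S) (hs : s ∈ Init)
    (ρ ρ' : ℕ → S) (hρ : IsRun step s ρ) (hρ' : IsRun step s ρ') :
    ((RunCost Term c ρ : ℝ) - (RunCost Term c ρ' : ℝ)) ≤ φ s - χ s := by
  exact sub_le_sub (hφ.runCost_le hterminating hs hρ) (hχ.le_runCost hterminating hs hρ')
end
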